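/- arXiv:1911.07357 — 6 statements merged into one kernel-verified Lean document; each statement's English description precedes it below -/
import Mathlib

section
/- There is an absolute constant c > 0 such that the following holds. Let n ≥ 2, t ∈ {1, …, n−1}, let p be a distribution on {-1,1}^n, and set α = E_{T∼S(t)}[d_TV(p_{T̄}, U)]. If 0 < α ≤ 1/2, then E_{ρ∼D(t,p)}[ ‖μ(p_{|ρ})‖₂ ] + E_{ρ∼D(t+1,p)}[ ‖μ(p_{|ρ})‖₂ ] ≥ c · (t/n) · α / ( (log n)² · log(n/α) · log(1/α) ). -/
/-!
The theorem holds with no logarithmic loss. For a set `T` of size `t`, let `q` be the mass function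
of the projection of `p` outside `T`, viewed as a function on the whole cube.

The first ingredient is a dimension-free L¹ Poincaré inequality, `oriented_poincare`. For `f` of
mean zero, `∑ |f|` is obtained by testing `f` against `g = sign f` and integrating the derivative of
`r ↦ ⟨f, T_r g⟩` along the noise operators `T_r`. Each edge of the cube contributes equally at its
two endpoints, so its contribution may be moved to either of them: edges can be oriented
arbitrarily. The derivative of the noise kernel is a combination of orthogonal scores, and
Cauchy–Schwarz bounds it by the Euclidean norm of the outgoing gradient over `√(1 - r ^ 2)`, which
is integrable in `r`.

It is applied to `q` minus a constant. Across an edge in direction `i ∉ T` the difference of `q` is,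
up to sign, the unnormalised mean `rawMean p (insert i T) x i` of coordinate `i` in the restriction
with star set `insert i T`. Each edge is oriented out of the endpoint where the unnormalised mean
vector of the restriction with star set `T` is longer. With `w` the length of the outgoing gradient
at `x`, either some outgoing edge has mean vector (over `insert i T`) of length at least `4 w`, and
then the triangle inequality and the orientation force `w ≤ rawNorm p T x`; or `w` is at most `4`
times the sum over `i` of `rawMean p (insert i T) x i ^ 2 / rawNorm p (insert i T) x`
(`gradient_le`). Summed over `T`, the last expression is regrouped by `S = insert i T` and collapses
to the sum of `rawNorm p S x`. This gives
`α ≤ (π / 4) (E_t + 8 (n - t) / (t + 1) E_{t+1})`, where `E_s` is the expected length of the mean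
vector of a restriction from `D(s, p)`; the logarithms in the denominator are all at least `log 2`.
-/

open scoped Classical

noncomputable section

namespace Subcube

/-- The ±1 value of a Boolean coordinate. -/
def sgn (b : Bool) : ℝ := if b then 1 else -1

/-- Flip coordinate `i` of `x`. -/
def flipAt {ι : Type*} [DecidableEq ι] (i : ι) (x : ι → Bool) : ι → Bool :=
  Function.update x i (!(x i))

/-- `p` is a probability mass function. -/
def IsDist {α : Type*} [Fintype α] (p : α → ℝ) : Prop :=
  (∀ a, 0 ≤ p a) ∧ ∑ a, p a = 1

/-- Total variation distance to the uniform distribution. -/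
def dTVU {α : Type*} [Fintype α] (p : α → ℝ) : ℝ :=
  (1/2) * ∑ a, |p a - 1 / (Fintype.card α : ℝ)|

/-- Probability mass of the event that a sample from `p` agrees with `y` outside `S`. -/
def offMass {n : ℕ} (p : (Fin n → Bool) → ℝ) (S : Finset (Fin n)) (y : Fin n → Bool) : ℝ :=
  ∑ x : Fin n → Bool, if ∀ j ∉ S, x j = y j then p x else 0

/-- Projection of `p` to the coordinates outside `S`. -/
def projDist {n : ℕ} (p : (Fin n → Bool) → ℝ) (S : Finset (Fin n)) :
    ({i : Fin n // i ∉ S} → Bool) → ℝ :=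
  fun u => ∑ x : Fin n → Bool, if ∀ i : {i : Fin n // i ∉ S}, x i.1 = u i then p x else 0

/-- Restriction of `p` with star set `S` and non-star coordinates set according to `y`. -/
def restrictDist {n : ℕ} (p : (Fin n → Bool) → ℝ) (S : Finset (Fin n)) (y : Fin n → Bool) :
    ({i : Fin n // i ∈ S} → Bool) → ℝ :=
  fun z =>
    (∑ x : Fin n → Bool,
      if (∀ i : {i : Fin n // i ∈ S}, x i.1 = z i) ∧ (∀ j ∉ S, x j = y j) then p x else 0)
      / offMass p S y

/-- Mean of coordinate `i` of `p` conditioned on agreeing with `y` outside `S`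
(the coordinate `i` of the mean vector of the restriction with star set `S`, for `i ∈ S`). -/
def condMean {n : ℕ} (p : (Fin n → Bool) → ℝ) (S : Finset (Fin n)) (y : Fin n → Bool)
    (i : Fin n) : ℝ :=
  (∑ x : Fin n → Bool, if ∀ j ∉ S, x j = y j then p x * sgn (x i) else 0) / offMass p S y

/-- Mean vector of a distribution on a Boolean cube. -/
def meanVec {ι : Type*} [Fintype ι] (p : (ι → Bool) → ℝ) : ι → ℝ :=
  fun i => ∑ x : ι → Bool, p x * sgn (x i)

/-- Squared Euclidean norm. -/
def normSq {ι : Type*} [Fintype ι] (v : ι → ℝ) : ℝ := ∑ i, v i ^ 2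

/-- Euclidean norm. -/
def l2norm {ι : Type*} [Fintype ι] (v : ι → ℝ) : ℝ := Real.sqrt (normSq v)

/-! ### The noise kernel on the cube -/

lemma sgn_mul_self (b : Bool) : sgn b * sgn b = 1 := by
  cases b <;> simp [sgn]

lemma sgn_not (b : Bool) : sgn (!b) = -sgn b := by
  cases b <;> simp [sgn]

lemma flipAt_flipAt {n : ℕ} (i : Fin n) (x : Fin n → Bool) : flipAt i (flipAt i x) = x := by
  simp [flipAt]

lemma sum_flipAt {n : ℕ} (i : Fin n) (φ : (Fin n → Bool) → ℝ) :
    ∑ x, φ (flipAt i x) = ∑ x, φ x :=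
  Equiv.sum_comp (Function.Involutive.toPerm (flipAt i) (flipAt_flipAt i)) φ

/-- The kernel `∏ᵢ (1 + r xᵢ yᵢ) / 2` of the noise operator with correlation `r`. -/
def noiseK {n : ℕ} (r : ℝ) (x y : Fin n → Bool) : ℝ :=
  ∏ i, (1 + r * (sgn (x i) * sgn (y i))) / 2

/-- The `i`-th summand of the derivative of `noiseK` with respect to `r`. -/
def noiseM {n : ℕ} (r : ℝ) (i : Fin n) (x y : Fin n → Bool) : ℝ :=
  (∏ j ∈ Finset.univ.erase i, (1 + r * (sgn (x j) * sgn (y j))) / 2) *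
    (sgn (x i) * sgn (y i) / 2)

lemma noiseK_hasDerivAt {n : ℕ} (r : ℝ) (x y : Fin n → Bool) :
    HasDerivAt (fun r => noiseK r x y) (∑ i, noiseM r i x y) r := by
  have h : ∀ i ∈ (Finset.univ : Finset (Fin n)),
      HasDerivAt (fun r : ℝ => (1 + r * (sgn (x i) * sgn (y i))) / 2)
        (sgn (x i) * sgn (y i) / 2) r := by
    intro i _
    simpa using (((hasDerivAt_id r).mul_const (sgn (x i) * sgn (y i))).const_add 1).div_const 2
  simpa [noiseK, noiseM] using HasDerivAt.fun_finsetProd h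

lemma noiseM_flipAt {n : ℕ} (r : ℝ) (i : Fin n) (x y : Fin n → Bool) :
    noiseM r i (flipAt i x) y = -noiseM r i x y := by
  have h : ∏ j ∈ Finset.univ.erase i, (1 + r * (sgn (flipAt i x j) * sgn (y j))) / 2
      = ∏ j ∈ Finset.univ.erase i, (1 + r * (sgn (x j) * sgn (y j))) / 2 := by
    refine Finset.prod_congr rfl fun j hj => ?_
    simp [flipAt, Function.update_of_ne (Finset.ne_of_mem_erase hj)]
  have h2 : sgn (flipAt i x i) = -sgn (x i) := by simp [flipAt, sgn_not]
  rw [noiseM, noiseM, h, h2]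
  ring

lemma one_add_pos {r : ℝ} (h0 : 0 ≤ r) (h1 : r < 1) (a b : Bool) :
    0 < 1 + r * (sgn a * sgn b) := by
  cases a <;> cases b <;> simp [sgn] <;> linarith

/-- The logarithmic derivative of the `i`-th factor of `noiseK`. -/
def score (r : ℝ) (a b : Bool) : ℝ := sgn a * sgn b / (1 + r * (sgn a * sgn b))

lemma noiseM_eq {n : ℕ} {r : ℝ} (h0 : 0 ≤ r) (h1 : r < 1) (i : Fin n) (x y : Fin n → Bool) :
    noiseM r i x y = noiseK r x y * score r (x i) (y i) := by
  rw [noiseK, ← Finset.prod_erase_mul _ _ (Finset.mem_univ i), noiseM, score]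
  generalize ∏ j ∈ Finset.univ.erase i, (1 + r * (sgn (x j) * sgn (y j))) / 2 = P
  have := (one_add_pos h0 h1 (x i) (y i)).ne'
  generalize sgn (x i) * sgn (y i) = u at *
  have e : (1 + r * u) / 2 * (u / (1 + r * u)) = u / 2 := by field_simp
  rw [mul_assoc, e]

lemma noiseK_nonneg {n : ℕ} {r : ℝ} (h0 : 0 ≤ r) (h1 : r < 1) (x y : Fin n → Bool) :
    0 ≤ noiseK r x y :=
  Finset.prod_nonneg fun i _ => by linarith [one_add_pos h0 h1 (x i) (y i)]

lemma sum_prod_eq {n : ℕ} (φ : Fin n → Bool → ℝ) :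
    ∑ y : Fin n → Bool, ∏ i, φ i (y i) = ∏ i, ∑ b, φ i b := by
  rw [Finset.prod_univ_sum, Fintype.piFinset_univ]

lemma sum_noiseK {n : ℕ} (r : ℝ) (x : Fin n → Bool) : ∑ y, noiseK r x y = 1 := by
  unfold noiseK
  rw [sum_prod_eq (fun i b => (1 + r * (sgn (x i) * sgn b)) / 2)]
  refine Finset.prod_eq_one fun i _ => ?_
  simp [sgn]; ring

/-- Under the product measure `noiseK r x`, the scores are centred and independent,
with variance `1 / (1 - r ^ 2)`. -/
lemma sum_noiseK_score {n : ℕ} {r : ℝ} (h0 : 0 ≤ r) (h1 : r < 1) (x : Fin n → Bool)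
    (i j : Fin n) :
    ∑ y, noiseK r x y * (score r (x i) (y i) * score r (x j) (y j))
      = if i = j then 1 / (1 - r ^ 2) else 0 := by
  have hr1 : 1 + r ≠ 0 := by linarith
  have hr2 : 1 - r ≠ 0 := by linarith
  have hr4 : 1 + -r ≠ 0 := by linarith
  have hr3 : 1 - r ^ 2 ≠ 0 := by
    have : 1 - r ^ 2 = (1 + r) * (1 - r) := by ring
    rw [this]; positivity
  have key : ∀ y : Fin n → Bool,
      noiseK r x y * (score r (x i) (y i) * score r (x j) (y j))
        = ∏ k, ((1 + r * (sgn (x k) * sgn (y k))) / 2 *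
          ((if k = i then score r (x k) (y k) else 1) *
            (if k = j then score r (x k) (y k) else 1))) := by
    intro y
    rw [Finset.prod_mul_distrib, Finset.prod_mul_distrib]
    simp [noiseK]
  simp_rw [key]
  rw [sum_prod_eq (fun k b => (1 + r * (sgn (x k) * sgn b)) / 2 *
          ((if k = i then score r (x k) b else 1) * (if k = j then score r (x k) b else 1)))]
  split_ifs with hij
  · subst hij
    rw [Finset.prod_eq_single_of_mem i (Finset.mem_univ i)]
    · cases x i <;> simp [score, sgn] <;> field_simp <;> ring
    · intro k _ hk
      simp [hk, sgn]; ring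
  · apply Finset.prod_eq_zero (Finset.mem_univ i)
    cases x i <;> simp [score, sgn, hij] <;> field_simp <;> ring

/-- Cauchy–Schwarz for a linear combination of scores. -/
lemma sum_noiseK_abs_le {n : ℕ} {r : ℝ} (h0 : 0 ≤ r) (h1 : r < 1) (x : Fin n → Bool)
    (c : Fin n → ℝ) :
    ∑ y, noiseK r x y * |∑ i, c i * score r (x i) (y i)|
      ≤ √(∑ i, c i ^ 2) / √(1 - r ^ 2) := by
  have hr : 0 < 1 - r ^ 2 := by nlinarith
  have hsq : ∑ y, noiseK r x y * (∑ i, c i * score r (x i) (y i)) ^ 2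
      = (∑ i, c i ^ 2) / (1 - r ^ 2) := by
    calc _ = ∑ y, ∑ i, ∑ j, c i * c j *
          (noiseK r x y * (score r (x i) (y i) * score r (x j) (y j))) := by
          refine Finset.sum_congr rfl fun y _ => ?_
          rw [sq, Finset.sum_mul_sum, Finset.mul_sum]
          refine Finset.sum_congr rfl fun i _ => ?_
          rw [Finset.mul_sum]
          exact Finset.sum_congr rfl fun j _ => by ring
      _ = ∑ i, ∑ j, c i * c j *
          ∑ y, (noiseK r x y * (score r (x i) (y i) * score r (x j) (y j))) := by
          rw [Finset.sum_comm]
          refine Finset.sum_congr rfl fun i _ => ?_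
          rw [Finset.sum_comm]
          exact Finset.sum_congr rfl fun j _ => by rw [Finset.mul_sum]
      _ = _ := by
          simp_rw [sum_noiseK_score h0 h1]
          rw [Finset.sum_div]
          refine Finset.sum_congr rfl fun i _ => ?_
          simp; ring
  rw [← Real.sqrt_div' _ hr.le, ← hsq]
  apply Real.le_sqrt_of_sq_le
  have cs := Finset.sum_mul_sq_le_sq_mul_sq Finset.univ (fun y => √(noiseK r x y))
    (fun y => √(noiseK r x y) * |∑ i, c i * score r (x i) (y i)|)
  simp only [mul_pow, sq_abs, ← mul_assoc, Real.mul_self_sqrt (noiseK_nonneg h0 h1 x _),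
    Real.sq_sqrt (noiseK_nonneg h0 h1 x _), sum_noiseK, one_mul] at cs
  exact cs

lemma noiseK_one {n : ℕ} (x y : Fin n → Bool) : noiseK 1 x y = if x = y then 1 else 0 := by
  split_ifs with h
  · subst h
    simp [noiseK, sgn_mul_self]
  · obtain ⟨i, hi⟩ := Function.ne_iff.mp h
    apply Finset.prod_eq_zero (Finset.mem_univ i)
    revert hi
    cases x i <;> cases y i <;> simp [sgn]

/-! ### An oriented L¹ Poincaré inequality -/

lemma sum_noiseM_orient {n : ℕ} (r : ℝ) (i : Fin n) (y : Fin n → Bool)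
    (f : (Fin n → Bool) → ℝ) (ω : (Fin n → Bool) → ℝ)
    (hω : ∀ x, ω x + ω (flipAt i x) = 1) :
    ∑ x, f x * noiseM r i x y = ∑ x, ω x * (f x - f (flipAt i x)) * noiseM r i x y := by
  have h := sum_flipAt i (fun x => ω x * f (flipAt i x) * noiseM r i x y)
  simp only [flipAt_flipAt, noiseM_flipAt] at h
  calc ∑ x, f x * noiseM r i x y
      = ∑ x, (ω x * f x * noiseM r i x y - ω (flipAt i x) * f x * -noiseM r i x y) := by
        refine Finset.sum_congr rfl fun x _ => ?_
        linear_combination (-(f x * noiseM r i x y)) * hω x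
    _ = _ := by
        rw [Finset.sum_sub_distrib, h, ← Finset.sum_sub_distrib]
        exact Finset.sum_congr rfl fun x _ => by ring

/-- An L¹ Poincaré inequality on the cube in which the contribution of every edge is split
between its endpoints by arbitrary weights `ω`. It is obtained by testing `f` against its sign
and differentiating along the noise semigroup, parametrised as `r = sin θ` so that the derivative
stays bounded. -/
lemma oriented_poincare {n : ℕ} (f : (Fin n → Bool) → ℝ) (hf : ∑ x, f x = 0)
    (ω : Fin n → (Fin n → Bool) → ℝ) (hω : ∀ i x, ω i x + ω i (flipAt i x) = 1) :
    ∑ x, |f x| ≤ (∑ x, √(∑ i, (ω i x * (f x - f (flipAt i x))) ^ 2)) * (Real.pi / 2) := by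
  set B := ∑ x, √(∑ i, (ω i x * (f x - f (flipAt i x))) ^ 2)
  let g : (Fin n → Bool) → ℝ := fun y => SignType.sign (f y)
  have hg : ∀ y, |g y| ≤ 1 := by
    intro y
    rcases lt_trichotomy (f y) 0 with h | h | h <;> simp [g, h]
  let H : ℝ → ℝ := fun θ => ∑ x, ∑ y, f x * g y * noiseK (Real.sin θ) x y
  have hH : ∀ θ, HasDerivAt H
      (∑ x, ∑ y, f x * g y * ((∑ i, noiseM (Real.sin θ) i x y) * Real.cos θ)) θ := by
    intro θ
    refine HasDerivAt.fun_sum fun x _ => HasDerivAt.fun_sum fun y _ => ?_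
    exact ((noiseK_hasDerivAt (Real.sin θ) x y).comp θ (Real.hasDerivAt_sin θ)).const_mul _
  have hbound : ∀ θ ∈ Set.Ioo 0 (Real.pi / 2), deriv H θ ≤ B := by
    intro θ hθ
    have hc : 0 < Real.cos θ := Real.cos_pos_of_mem_Ioo ⟨by linarith [hθ.1, Real.pi_pos], hθ.2⟩
    have h0 : 0 ≤ Real.sin θ := Real.sin_nonneg_of_nonneg_of_le_pi hθ.1.le
      (by linarith [hθ.2, Real.pi_pos])
    have h1 : Real.sin θ < 1 := by
      nlinarith [Real.sin_sq_add_cos_sq θ, Real.sin_le_one θ]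
    have hs : √(1 - Real.sin θ ^ 2) = Real.cos θ := by
      rw [← Real.cos_sq', Real.sqrt_sq hc.le]
    rw [(hH θ).deriv]
    calc ∑ x, ∑ y, f x * g y * ((∑ i, noiseM (Real.sin θ) i x y) * Real.cos θ)
        = Real.cos θ * ∑ y, g y * ∑ i, ∑ x, f x * noiseM (Real.sin θ) i x y := by
          rw [Finset.sum_comm, Finset.mul_sum]
          refine Finset.sum_congr rfl fun y _ => ?_
          rw [Finset.sum_comm, ← mul_assoc, Finset.mul_sum]
          refine Finset.sum_congr rfl fun x _ => ?_
          rw [← Finset.mul_sum]; ring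
      _ = Real.cos θ * ∑ x, ∑ y, g y * ∑ i, ω i x * (f x - f (flipAt i x)) *
            noiseM (Real.sin θ) i x y := by
          rw [Finset.sum_comm]
          congr 1
          refine Finset.sum_congr rfl fun y _ => ?_
          rw [← Finset.mul_sum, Finset.sum_comm]
          congr 1
          conv_rhs => rw [Finset.sum_comm]
          rw [Finset.sum_comm]
          exact Finset.sum_congr rfl fun i _ => sum_noiseM_orient _ _ _ _ _ (hω i)
      _ ≤ Real.cos θ * ∑ x, √(∑ i, (ω i x * (f x - f (flipAt i x))) ^ 2) / Real.cos θ := by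
          refine mul_le_mul_of_nonneg_left (Finset.sum_le_sum fun x _ => ?_) hc.le
          rw [← hs]
          refine le_trans (Finset.sum_le_sum fun y _ => ?_) (sum_noiseK_abs_le h0 h1 x _)
          have hK := noiseK_nonneg h0 h1 x y
          have e : ∑ i, ω i x * (f x - f (flipAt i x)) * noiseM (Real.sin θ) i x y
              = noiseK (Real.sin θ) x y *
                ∑ i, ω i x * (f x - f (flipAt i x)) * score (Real.sin θ) (x i) (y i) := by
            rw [Finset.mul_sum]
            refine Finset.sum_congr rfl fun i _ => ?_
            rw [noiseM_eq h0 h1]; ring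
          rw [e]
          refine le_trans (le_abs_self _) ?_
          rw [abs_mul, abs_mul, abs_of_nonneg hK]
          exact mul_le_of_le_one_left (by positivity) (hg y)
      _ = B := by
          rw [← Finset.sum_div, mul_div_cancel₀ _ hc.ne']
  have hmv := Convex.image_sub_le_mul_sub_of_deriv_le (convex_Icc 0 (Real.pi / 2))
    (f := H) (C := B) (fun θ _ => (hH θ).continuousAt.continuousWithinAt)
    (fun θ _ => (hH θ).differentiableAt.differentiableWithinAt)
    (by rw [interior_Icc]; exact hbound) 0 (by simp; positivity) (Real.pi / 2)
    (by simp; positivity) (by positivity)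
  have e0 : H 0 = 0 := by
    have : ∀ x y : Fin n → Bool, noiseK (Real.sin 0) x y = ∏ _i : Fin n, (1 / 2 : ℝ) := by
      intro x y; simp [noiseK]
    simp only [H, this]
    simp_rw [mul_assoc, ← Finset.mul_sum]
    rw [← Finset.sum_mul, hf, zero_mul]
  have e1 : H (Real.pi / 2) = ∑ x, |f x| := by
    simp only [H, Real.sin_pi_div_two, noiseK_one]
    refine Finset.sum_congr rfl fun x _ => ?_
    simp [g]
  rw [e0, e1] at hmv
  simpa using hmv

/-! ### Block sums and restricted means -/

lemma offMass_mul_sgn {n : ℕ} (p : (Fin n → Bool) → ℝ) {S : Finset (Fin n)} {i : Fin n}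
    (hi : i ∉ S) (x : Fin n → Bool) :
    offMass (fun y => p y * sgn (y i)) S x = sgn (x i) * offMass p S x := by
  unfold offMass
  rw [Finset.mul_sum]
  refine Finset.sum_congr rfl fun y _ => ?_
  split_ifs with h
  · change p y * sgn (y i) = _
    rw [h i hi]; ring
  · simp

lemma offMass_insert {n : ℕ} (φ : (Fin n → Bool) → ℝ) {S : Finset (Fin n)} {i : Fin n}
    (hi : i ∉ S) (x : Fin n → Bool) :
    offMass φ (insert i S) x = offMass φ S x + offMass φ S (flipAt i x) := by
  unfold offMass
  rw [← Finset.sum_add_distrib]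
  refine Finset.sum_congr rfl fun y _ => ?_
  have h1 : (∀ j ∉ S, y j = x j) ↔ (∀ j ∉ insert i S, y j = x j) ∧ y i = x i := by
    constructor
    · exact fun h => ⟨fun j hj => h j fun hS => hj (Finset.mem_insert_of_mem hS), h i hi⟩
    · rintro ⟨h, h'⟩ j hj
      by_cases hji : j = i
      · rw [hji, h']
      · exact h j (by simp [hji, hj])
  have h2 : (∀ j ∉ S, y j = flipAt i x j) ↔ (∀ j ∉ insert i S, y j = x j) ∧ y i ≠ x i := by
    constructor
    · intro h
      refine ⟨fun j hj => ?_, ?_⟩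
      · rw [Finset.mem_insert, not_or] at hj
        rw [h j hj.2, flipAt, Function.update_of_ne hj.1]
      · rw [h i hi]; simp [flipAt]
    · rintro ⟨h, h'⟩ j hj
      by_cases hji : j = i
      · subst hji
        simp only [flipAt, Function.update_self]
        revert h'
        cases y j <;> cases x j <;> simp
      · rw [flipAt, Function.update_of_ne hji]
        exact h j (by simp [hji, hj])
  rw [if_congr h1 rfl rfl, if_congr h2 rfl rfl]
  by_cases ha : ∀ j ∉ insert i S, y j = x j
  · by_cases hb : y i = x i
    · rw [if_pos ha, if_pos ⟨ha, hb⟩, if_neg fun h => h.2 hb, add_zero]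
    · rw [if_pos ha, if_neg fun h => hb h.2, if_pos ⟨ha, hb⟩, zero_add]
  · rw [if_neg ha, if_neg fun h => ha h.1, if_neg fun h => ha h.1, add_zero]

lemma offMass_flipAt {n : ℕ} (φ : (Fin n → Bool) → ℝ) {S : Finset (Fin n)} {i : Fin n}
    (hi : i ∈ S) (x : Fin n → Bool) : offMass φ S (flipAt i x) = offMass φ S x := by
  unfold offMass
  refine Finset.sum_congr rfl fun y _ => ?_
  have : (∀ j ∉ S, y j = flipAt i x j) ↔ (∀ j ∉ S, y j = x j) := by
    refine forall₂_congr fun j hj => ?_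
    have : j ≠ i := fun h => hj (h ▸ hi)
    rw [flipAt, Function.update_of_ne this]
  simp only [this]

lemma offMass_congr {n : ℕ} (φ : (Fin n → Bool) → ℝ) {S : Finset (Fin n)}
    {x y : Fin n → Bool} (h : ∀ j ∉ S, x j = y j) : offMass φ S x = offMass φ S y := by
  unfold offMass
  refine Finset.sum_congr rfl fun z _ => ?_
  have : (∀ j ∉ S, z j = x j) ↔ (∀ j ∉ S, z j = y j) :=
    forall₂_congr fun j hj => by rw [h j hj]
  simp only [this]

lemma offMass_one {n : ℕ} (S : Finset (Fin n)) (x : Fin n → Bool) :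
    offMass (fun _ => 1) S x = 2 ^ S.card := by
  induction S using Finset.induction_on generalizing x with
  | empty => simp [offMass, ← funext_iff]
  | insert i S hi ih =>
    rw [offMass_insert _ hi, ih, ih, Finset.card_insert_of_notMem hi]; ring

lemma sum_offMass_mul {n : ℕ} (φ G : (Fin n → Bool) → ℝ) (S : Finset (Fin n))
    (hG : ∀ x y, (∀ j ∉ S, x j = y j) → G x = G y) :
    ∑ x, offMass φ S x * G x = 2 ^ S.card * ∑ x, φ x * G x := by
  calc ∑ x, offMass φ S x * G x
      = ∑ y, φ y * G y * offMass (fun _ => 1) S y := by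
        simp only [offMass, Finset.sum_mul, Finset.mul_sum]
        rw [Finset.sum_comm]
        refine Finset.sum_congr rfl fun y _ => Finset.sum_congr rfl fun x _ => ?_
        by_cases h : ∀ j ∉ S, y j = x j
        · have h' : ∀ j ∉ S, x j = y j := fun j hj => (h j hj).symm
          rw [if_pos h, if_pos h', hG x y h', mul_one]
        · have h' : ¬ ∀ j ∉ S, x j = y j := fun h' => h fun j hj => (h' j hj).symm
          rw [if_neg h, if_neg h']; simp
    _ = _ := by
        rw [Finset.mul_sum]
        exact Finset.sum_congr rfl fun y _ => by rw [offMass_one]; ring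

/-- The mean of coordinate `i` over the block of points agreeing with `x` outside `S`, before
dividing by the mass `offMass p S x` of that block. -/
def rawMean {n : ℕ} (p : (Fin n → Bool) → ℝ) (S : Finset (Fin n)) (x : Fin n → Bool)
    (i : Fin n) : ℝ :=
  offMass (fun y => p y * sgn (y i)) S x

/-- The Euclidean norm of the vector of `rawMean`s over the coordinates in `S`. -/
def rawNorm {n : ℕ} (p : (Fin n → Bool) → ℝ) (S : Finset (Fin n)) (x : Fin n → Bool) : ℝ :=
  √(∑ i ∈ S, rawMean p S x i ^ 2)

lemma offMass_nonneg {n : ℕ} {p : (Fin n → Bool) → ℝ} (hp : ∀ x, 0 ≤ p x)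
    (S : Finset (Fin n)) (x : Fin n → Bool) : 0 ≤ offMass p S x :=
  Finset.sum_nonneg fun y _ => by split_ifs <;> simp [hp]

lemma abs_rawMean_le {n : ℕ} {p : (Fin n → Bool) → ℝ} (hp : ∀ x, 0 ≤ p x)
    (S : Finset (Fin n)) (x : Fin n → Bool) (i : Fin n) :
    |rawMean p S x i| ≤ offMass p S x := by
  unfold rawMean offMass
  refine le_trans (Finset.abs_sum_le_sum_abs _ _) (Finset.sum_le_sum fun y _ => ?_)
  split_ifs
  · change |p y * sgn (y i)| ≤ p y
    cases y i <;> simp [sgn, abs_of_nonneg (hp y)]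
  · simp

lemma meanVec_restrictDist {n : ℕ} (p : (Fin n → Bool) → ℝ) (S : Finset (Fin n))
    (x : Fin n → Bool) (i : {i : Fin n // i ∈ S}) :
    meanVec (restrictDist p S x) i = rawMean p S x i.1 / offMass p S x := by
  unfold meanVec restrictDist
  simp_rw [div_mul_eq_mul_div]
  rw [← Finset.sum_div]
  congr 1
  unfold rawMean
  rw [offMass]
  simp_rw [Finset.sum_mul]
  rw [Finset.sum_comm]
  refine Finset.sum_congr rfl fun y _ => ?_
  rw [Finset.sum_eq_single (fun i : {i : Fin n // i ∈ S} => y i.1)]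
  · by_cases h : ∀ j ∉ S, y j = x j
    · rw [if_pos h, if_pos ⟨fun _ => rfl, h⟩]
    · rw [if_neg h, if_neg (fun h' => h h'.2), zero_mul]
  · intro z _ hz
    rw [if_neg, zero_mul]
    exact fun h => hz (funext fun i => (h.1 i).symm)
  · simp

lemma l2norm_restrictDist {n : ℕ} {p : (Fin n → Bool) → ℝ} (hp : ∀ x, 0 ≤ p x)
    (S : Finset (Fin n)) (x : Fin n → Bool) :
    l2norm (meanVec (restrictDist p S x)) = rawNorm p S x / offMass p S x := by
  unfold l2norm normSq rawNorm
  simp_rw [meanVec_restrictDist, div_pow]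
  rw [← Finset.sum_div, Real.sqrt_div' _ (sq_nonneg _), Real.sqrt_sq (offMass_nonneg hp S x)]
  congr 2
  exact (Finset.sum_subtype S (fun _ => Iff.rfl) (fun i => rawMean p S x i ^ 2)).symm

lemma sum_rawNorm {n : ℕ} {p : (Fin n → Bool) → ℝ} (hp : ∀ x, 0 ≤ p x)
    (S : Finset (Fin n)) :
    ∑ x, rawNorm p S x
      = 2 ^ S.card * ∑ x, p x * l2norm (meanVec (restrictDist p S x)) := by
  rw [← sum_offMass_mul]
  · refine Finset.sum_congr rfl fun x _ => ?_
    rw [l2norm_restrictDist hp]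
    by_cases h : offMass p S x = 0
    · have : ∀ i, rawMean p S x i = 0 := fun i =>
        abs_nonpos_iff.mp (h ▸ abs_rawMean_le hp S x i)
      simp [rawNorm, this]
    · field_simp
  · intro x y h
    rw [l2norm_restrictDist hp, l2norm_restrictDist hp, rawNorm, rawNorm, offMass_congr p h]
    simp only [rawMean, offMass_congr _ h]

lemma rawMean_insert_self {n : ℕ} (p : (Fin n → Bool) → ℝ) {T : Finset (Fin n)} {i : Fin n}
    (hi : i ∉ T) (x : Fin n → Bool) :
    rawMean p (insert i T) x i = sgn (x i) * (offMass p T x - offMass p T (flipAt i x)) := by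
  rw [rawMean, offMass_insert _ hi, offMass_mul_sgn p hi, offMass_mul_sgn p hi]
  simp [flipAt, sgn_not]; ring

/-- Freezing coordinate `i` splits the block of `insert i T` into two; by the triangle inequality,
the means of the remaining coordinates cannot be large on the whole block without being large on
one of the two halves. -/
lemma rawNorm_insert_sq_le {n : ℕ} (p : (Fin n → Bool) → ℝ) {T : Finset (Fin n)} {i : Fin n}
    (hi : i ∉ T) (x : Fin n → Bool) :
    rawNorm p (insert i T) x ^ 2
      ≤ rawMean p (insert i T) x i ^ 2 + (rawNorm p T x + rawNorm p T (flipAt i x)) ^ 2 := by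
  have e : ∀ S y, rawNorm p S y ^ 2 = ∑ j ∈ S, rawMean p S y j ^ 2 := fun S y =>
    Real.sq_sqrt (Finset.sum_nonneg fun _ _ => sq_nonneg _)
  have cs := Real.sum_mul_le_sqrt_mul_sqrt T (rawMean p T x) (rawMean p T (flipAt i x))
  change _ ≤ rawNorm p T x * rawNorm p T (flipAt i x) at cs
  rw [e, Finset.sum_insert hi, add_sq, e, e]
  have : ∑ j ∈ T, rawMean p (insert i T) x j ^ 2
      = ∑ j ∈ T, rawMean p T x j ^ 2
        + 2 * ∑ j ∈ T, rawMean p T x j * rawMean p T (flipAt i x) j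
        + ∑ j ∈ T, rawMean p T (flipAt i x) j ^ 2 := by
    rw [Finset.mul_sum, ← Finset.sum_add_distrib, ← Finset.sum_add_distrib]
    refine Finset.sum_congr rfl fun j _ => ?_
    simp only [rawMean, offMass_insert _ hi]; ring
  rw [this]
  linarith

/-! ### The distance to uniform of a single projection -/

lemma sum_comp_restrict {n : ℕ} (T : Finset (Fin n))
    (Φ : ({i : Fin n // i ∉ T} → Bool) → ℝ) :
    ∑ x : Fin n → Bool, Φ (fun i => x i.1) = 2 ^ T.card * ∑ u, Φ u := by
  rw [← Equiv.sum_comp (Equiv.piEquivPiSubtypeProd (fun i => i ∉ T) (fun _ => Bool)).symm,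
    Fintype.sum_prod_type, Finset.mul_sum]
  refine Finset.sum_congr rfl fun u _ => ?_
  have : ∀ v, (fun i : {i : Fin n // i ∉ T} =>
      (Equiv.piEquivPiSubtypeProd (fun i => i ∉ T) (fun _ => Bool)).symm (u, v) i.1) = u := by
    intro v; funext i
    simp [Equiv.piEquivPiSubtypeProd, i.2]
  simp only [this, Finset.sum_const, nsmul_eq_mul, Finset.card_univ]
  congr 1
  have : Fintype.card {i : Fin n // ¬ i ∉ T} = T.card := by
    rw [Fintype.card_subtype]; congr 1; ext; simp
  rw [Fintype.card_fun, this]; simp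

lemma projDist_eq {n : ℕ} (p : (Fin n → Bool) → ℝ) (T : Finset (Fin n)) (x : Fin n → Bool) :
    projDist p T (fun i => x i.1) = offMass p T x := by
  unfold projDist offMass
  refine Finset.sum_congr rfl fun y _ => ?_
  have : (∀ i : {i : Fin n // i ∉ T}, y i.1 = x i.1) ↔ ∀ j ∉ T, y j = x j :=
    ⟨fun h j hj => h ⟨j, hj⟩, fun h i => h i.1 i.2⟩
  simp only [this]

/-- At a vertex, the gradient `w` (a Euclidean norm of weighted edge differences `D i`) is compared
with the norms `N i` of the mean vectors on the edges. If every edge counted has `N i < 4 w`, then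
the identity `w = w ^ 2 / w` replaces one factor `w` by `N i`; otherwise an edge with large `N i`
forces `h` to be at least `w`. -/
lemma gradient_le {ι : Type*} (U : Finset ι) (ω D N : ι → ℝ) (h : ℝ) (hh : 0 ≤ h)
    (hN : ∀ i ∈ U, 0 ≤ N i) (hDN : ∀ i ∈ U, D i ^ 2 ≤ N i ^ 2)
    (hω : ∀ i ∈ U, ω i = 0 ∨ (1 / 2 ≤ ω i ∧ ω i ≤ 1 ∧ N i ^ 2 ≤ D i ^ 2 + (2 * h) ^ 2)) :
    √(∑ i ∈ U, (ω i * D i) ^ 2) ≤ h + 4 * ∑ i ∈ U, D i ^ 2 / N i := by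
  set w := √(∑ i ∈ U, (ω i * D i) ^ 2) with hw
  have hw0 : 0 ≤ w := Real.sqrt_nonneg _
  have hsum : 0 ≤ ∑ i ∈ U, D i ^ 2 / N i :=
    Finset.sum_nonneg fun i hi => div_nonneg (sq_nonneg _) (hN i hi)
  have hw2 : w ^ 2 = ∑ i ∈ U, (ω i * D i) ^ 2 :=
    Real.sq_sqrt (Finset.sum_nonneg fun i _ => sq_nonneg _)
  by_cases hex : ∃ i ∈ U, ω i ≠ 0 ∧ 4 * w ≤ N i
  · obtain ⟨i, hi, h0, hNi⟩ := hex
    obtain ⟨h1, h2, h3⟩ := (hω i hi).resolve_left h0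
    have hle : (ω i * D i) ^ 2 ≤ w ^ 2 := by
      rw [hw2]
      exact Finset.single_le_sum (f := fun i => (ω i * D i) ^ 2) (fun i _ => sq_nonneg _) hi
    have hD : D i ^ 2 ≤ 4 * w ^ 2 := by
      rw [mul_pow] at hle
      have : 1 / 4 ≤ ω i ^ 2 := by nlinarith
      nlinarith [sq_nonneg (D i)]
    have : w ≤ h := by
      apply le_of_sq_le_sq _ hh
      nlinarith
    linarith
  · push Not at hex
    have hstep : w ^ 2 ≤ w * (4 * ∑ i ∈ U, D i ^ 2 / N i) := by
      rw [hw2, Finset.mul_sum, Finset.mul_sum]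
      refine Finset.sum_le_sum fun i hi => ?_
      by_cases h0 : ω i = 0
      · rw [h0]
        have := div_nonneg (sq_nonneg (D i)) (hN i hi)
        simp; positivity
      · obtain ⟨h1, h2, -⟩ := (hω i hi).resolve_left h0
        have hlt := hex i hi h0
        have hb : (ω i * D i) ^ 2 ≤ D i ^ 2 := by
          rw [mul_pow]
          have : ω i ^ 2 ≤ 1 := by nlinarith
          nlinarith [sq_nonneg (D i)]
        refine hb.trans ?_
        rcases (hN i hi).eq_or_lt with hz | hpos
        · have := hDN i hi
          rw [← hz] at this ⊢
          simpa using this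
        · have e : w * (4 * (D i ^ 2 / N i)) = D i ^ 2 * (4 * w) / N i := by ring
          rw [e, le_div_iff₀ hpos]
          exact mul_le_mul_of_nonneg_left hlt.le (sq_nonneg _)
    rcases hw0.eq_or_lt with hz | hpos
    · rw [← hz]; positivity
    · have : w ≤ 4 * ∑ i ∈ U, D i ^ 2 / N i := by nlinarith
      linarith

/-- The oriented Poincaré inequality for the density of the projection outside `T`, each edge being
oriented out of the endpoint at which the restriction to `T` has the larger unnormalised mean
vector. -/
lemma dTVU_projDist_le {n : ℕ} {p : (Fin n → Bool) → ℝ} (hp : IsDist p) (T : Finset (Fin n)) :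
    2 ^ T.card * (2 * dTVU (projDist p T))
      ≤ (∑ x, (rawNorm p T x + 4 * ∑ i ∈ Tᶜ,
          rawMean p (insert i T) x i ^ 2 / rawNorm p (insert i T) x)) * (Real.pi / 2) := by
  set k : ℝ := 1 / (Fintype.card ({i : Fin n // i ∉ T} → Bool) : ℝ) with hk
  let f : (Fin n → Bool) → ℝ := fun x => offMass p T x - k
  have hcard : (Fintype.card ({i : Fin n // i ∉ T} → Bool) : ℝ) ≠ 0 := by simp
  have habs : ∑ x, |f x| = 2 ^ T.card * (2 * dTVU (projDist p T)) := by
    have := sum_comp_restrict T (fun u => |projDist p T u - k|)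
    simp only [projDist_eq] at this
    rw [dTVU, ← mul_assoc 2, mul_one_div_cancel two_ne_zero, one_mul]
    exact this
  have hf : ∑ x, f x = 0 := by
    have h1 := sum_comp_restrict T (fun _ => k)
    have h2 := sum_offMass_mul p (fun _ => 1) T (fun _ _ _ => rfl)
    simp only [mul_one, hp.2] at h2
    simp only [f, Finset.sum_sub_distrib, h1, h2]
    rw [Finset.sum_const, nsmul_eq_mul, Finset.card_univ, hk, mul_one_div_cancel hcard]
    ring
  -- Ties are split evenly, so that the two weights of an edge always add up to `1`.
  let ω : Fin n → (Fin n → Bool) → ℝ := fun i x =>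
    if rawNorm p T (flipAt i x) < rawNorm p T x then 1
    else if rawNorm p T x < rawNorm p T (flipAt i x) then 0 else 1 / 2
  have hω : ∀ i x, ω i x + ω i (flipAt i x) = 1 := by
    intro i x
    simp only [ω, flipAt_flipAt]
    split_ifs with h1 h2 <;> first | (exfalso; linarith) | norm_num
  rw [← habs]
  refine (oriented_poincare f hf ω hω).trans ?_
  refine mul_le_mul_of_nonneg_right (Finset.sum_le_sum fun x _ => ?_) (by positivity)
  have hdiff : ∑ i, (ω i x * (f x - f (flipAt i x))) ^ 2
      = ∑ i ∈ Tᶜ, (ω i x * rawMean p (insert i T) x i) ^ 2 := by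
    rw [← Finset.sum_subset (Finset.subset_univ Tᶜ)]
    · refine Finset.sum_congr rfl fun i hi => ?_
      rw [rawMean_insert_self p (Finset.mem_compl.mp hi)]
      have := sgn_mul_self (x i)
      simp only [f]
      linear_combination (-(ω i x * (offMass p T x - offMass p T (flipAt i x))) ^ 2) * this
    · intro i _ hi
      have : i ∈ T := by simpa using hi
      simp [f, offMass_flipAt p this]
  rw [hdiff]
  apply gradient_le
  · exact Real.sqrt_nonneg _
  · exact fun i _ => Real.sqrt_nonneg _
  · intro i _
    rw [rawNorm, Real.sq_sqrt (Finset.sum_nonneg fun _ _ => sq_nonneg _)]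
    exact Finset.single_le_sum (f := fun j => rawMean p (insert i T) x j ^ 2)
      (fun _ _ => sq_nonneg _) (Finset.mem_insert_self i T)
  · intro i hi
    have hins := rawNorm_insert_sq_le p (Finset.mem_compl.mp hi) x
    have n1 : 0 ≤ rawNorm p T x := Real.sqrt_nonneg _
    have n2 : 0 ≤ rawNorm p T (flipAt i x) := Real.sqrt_nonneg _
    by_cases hlt : rawNorm p T x < rawNorm p T (flipAt i x)
    · left
      simp [ω, hlt, hlt.le]
    · right
      refine ⟨?_, ?_, ?_⟩
      · simp only [ω, if_neg hlt]; split_ifs <;> norm_num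
      · simp only [ω, if_neg hlt]; split_ifs <;> norm_num
      · push Not at hlt
        refine hins.trans (add_le_add le_rfl (pow_le_pow_left₀ (by positivity) ?_ 2))
        linarith

/-! ### Averaging over the star sets -/

lemma sum_insert_eq {n t : ℕ} (φ : Finset (Fin n) → Fin n → ℝ) :
    ∑ T ∈ Finset.powersetCard t (Finset.univ : Finset (Fin n)), ∑ i ∈ Tᶜ, φ (insert i T) i
      = ∑ S ∈ Finset.powersetCard (t + 1) (Finset.univ : Finset (Fin n)), ∑ i ∈ S, φ S i := by
  rw [Finset.sum_sigma', Finset.sum_sigma']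
  refine Finset.sum_bij' (fun a _ => ⟨insert a.2 a.1, a.2⟩) (fun a _ => ⟨a.1.erase a.2, a.2⟩)
    ?_ ?_ ?_ ?_ ?_
  · rintro ⟨T, i⟩ h
    simp only [Finset.mem_sigma, Finset.mem_powersetCard, Finset.mem_compl] at h ⊢
    exact ⟨⟨Finset.subset_univ _, by rw [Finset.card_insert_of_notMem h.2, h.1.2]⟩,
      Finset.mem_insert_self _ _⟩
  · rintro ⟨S, i⟩ h
    simp only [Finset.mem_sigma, Finset.mem_powersetCard, Finset.mem_compl] at h ⊢
    exact ⟨⟨Finset.subset_univ _, by rw [Finset.card_erase_of_mem h.2, h.1.2]; rfl⟩,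
      Finset.notMem_erase _ _⟩
  · rintro ⟨T, i⟩ h
    simp only [Finset.mem_sigma, Finset.mem_compl] at h
    simp [Finset.erase_insert h.2]
  · rintro ⟨S, i⟩ h
    simp only [Finset.mem_sigma] at h
    simp [Finset.insert_erase h.2]
  · rintro ⟨T, i⟩ h
    rfl

lemma sum_rawMean_div {n : ℕ} (p : (Fin n → Bool) → ℝ) (S : Finset (Fin n))
    (x : Fin n → Bool) :
    ∑ i ∈ S, rawMean p S x i ^ 2 / rawNorm p S x = rawNorm p S x := by
  rw [← Finset.sum_div, rawNorm, Real.div_sqrt]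

lemma sum_dTVU_le {n t : ℕ} {p : (Fin n → Bool) → ℝ} (hp : IsDist p) :
    ∑ T ∈ Finset.powersetCard t (Finset.univ : Finset (Fin n)), dTVU (projDist p T)
      ≤ (∑ S ∈ Finset.powersetCard t (Finset.univ : Finset (Fin n)),
            ∑ x, p x * l2norm (meanVec (restrictDist p S x))
        + 8 * ∑ S ∈ Finset.powersetCard (t + 1) (Finset.univ : Finset (Fin n)),
            ∑ x, p x * l2norm (meanVec (restrictDist p S x))) * (Real.pi / 4) := by
  have h := Finset.sum_le_sum
    fun T (_ : T ∈ Finset.powersetCard t (Finset.univ : Finset (Fin n))) => dTVU_projDist_le hp T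
  have hl : ∑ T ∈ Finset.powersetCard t (Finset.univ : Finset (Fin n)),
        2 ^ T.card * (2 * dTVU (projDist p T))
      = 2 ^ t * (2 * ∑ T ∈ Finset.powersetCard t (Finset.univ : Finset (Fin n)),
          dTVU (projDist p T)) := by
    rw [Finset.mul_sum, Finset.mul_sum]
    refine Finset.sum_congr rfl fun T hT => ?_
    rw [(Finset.mem_powersetCard.mp hT).2]
  have hr : ∀ s, ∑ S ∈ Finset.powersetCard s (Finset.univ : Finset (Fin n)),
        ∑ x, rawNorm p S x
      = 2 ^ s * ∑ S ∈ Finset.powersetCard s (Finset.univ : Finset (Fin n)),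
          ∑ x, p x * l2norm (meanVec (restrictDist p S x)) := by
    intro s
    rw [Finset.mul_sum]
    refine Finset.sum_congr rfl fun T hT => ?_
    rw [sum_rawNorm hp.1, (Finset.mem_powersetCard.mp hT).2]
  have hs : ∑ T ∈ Finset.powersetCard t (Finset.univ : Finset (Fin n)),
        ∑ x, ∑ i ∈ Tᶜ, rawMean p (insert i T) x i ^ 2 / rawNorm p (insert i T) x
      = ∑ S ∈ Finset.powersetCard (t + 1) (Finset.univ : Finset (Fin n)),
          ∑ x, rawNorm p S x := by
    rw [Finset.sum_comm]
    conv_rhs => rw [Finset.sum_comm]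
    refine Finset.sum_congr rfl fun x _ => ?_
    rw [sum_insert_eq (fun S i => rawMean p S x i ^ 2 / rawNorm p S x)]
    exact Finset.sum_congr rfl fun S _ => sum_rawMean_div p S x
  rw [hl, ← Finset.sum_mul] at h
  simp only [Finset.sum_add_distrib, ← Finset.mul_sum] at h
  rw [hs, hr, hr, pow_succ] at h
  have h2 : (0 : ℝ) < 2 ^ t := by positivity
  refine le_of_mul_le_mul_left ?_ h2
  linarith

/-- there is an absolute `c > 0` such that for every `n ≥ 2`, `t ∈ {1,…,n−1}`,
every distribution `p` on `{-1,1}^n`, and `α = E_{T∼S(t)}[d_TV(p_{T̄},U)]` with `0 < α ≤ 1/2`: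
`E_{ρ∼D(t,p)}[‖μ(p_{|ρ})‖₂] + E_{ρ∼D(t+1,p)}[‖μ(p_{|ρ})‖₂]
  ≥ c·(t/n)·α/((log n)²·log(n/α)·log(1/α))`. -/
theorem stmt7 : ∃ c > (0:ℝ), ∀ n : ℕ, 2 ≤ n → ∀ t : ℕ, 1 ≤ t → t < n →
    ∀ p : (Fin n → Bool) → ℝ, IsDist p → ∀ α : ℝ,
    α = (1 / (n.choose t : ℝ)) *
        ∑ T ∈ Finset.powersetCard t (Finset.univ : Finset (Fin n)), dTVU (projDist p T) →
    0 < α → α ≤ 1/2 →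
    c * ((t:ℝ) / n) * α / ((Real.log n) ^ 2 * Real.log (n / α) * Real.log (1 / α))
      ≤ ((1 / (n.choose t : ℝ)) *
          ∑ S ∈ Finset.powersetCard t (Finset.univ : Finset (Fin n)),
            ∑ x : Fin n → Bool, p x * l2norm (meanVec (restrictDist p S x)))
        + ((1 / (n.choose (t+1) : ℝ)) *
          ∑ S ∈ Finset.powersetCard (t+1) (Finset.univ : Finset (Fin n)),
            ∑ x : Fin n → Bool, p x * l2norm (meanVec (restrictDist p S x))) := by
  refine ⟨Real.log 2 ^ 4 / 8, by have := Real.log_pos one_lt_two; positivity, ?_⟩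
  intro n hn t ht htn p hp α hα hα0 hα1
  set E0 := ∑ S ∈ Finset.powersetCard t (Finset.univ : Finset (Fin n)),
            ∑ x : Fin n → Bool, p x * l2norm (meanVec (restrictDist p S x)) with hE0
  set E1 := ∑ S ∈ Finset.powersetCard (t+1) (Finset.univ : Finset (Fin n)),
            ∑ x : Fin n → Bool, p x * l2norm (meanVec (restrictDist p S x)) with hE1
  have hpos : ∀ s, 0 ≤ ∑ S ∈ Finset.powersetCard s (Finset.univ : Finset (Fin n)),
      ∑ x : Fin n → Bool, p x * l2norm (meanVec (restrictDist p S x)) := fun s =>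
    Finset.sum_nonneg fun S _ => Finset.sum_nonneg fun x _ =>
      mul_nonneg (hp.1 x) (Real.sqrt_nonneg _)
  have h0 : 0 ≤ E0 := hpos t
  have h1 : 0 ≤ E1 := hpos (t + 1)
  have hmain : _ ≤ (E0 + 8 * E1) * (Real.pi / 4) := sum_dTVU_le (t := t) hp
  have hn0 : (2 : ℝ) ≤ n := by exact_mod_cast hn
  have ht0 : (1 : ℝ) ≤ t := by exact_mod_cast ht
  have htn0 : (t : ℝ) ≤ n := by exact_mod_cast htn.le
  have hC0 : (0 : ℝ) < n.choose t := by exact_mod_cast Nat.choose_pos htn.le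
  have hC1 : (0 : ℝ) < n.choose (t + 1) := by exact_mod_cast Nat.choose_pos htn
  have hch : (n.choose (t + 1) : ℝ) * (t + 1) = n.choose t * (n - t) := by
    have := Nat.choose_succ_right_eq n t
    rw [← Nat.cast_sub htn.le]
    exact_mod_cast this
  set A0 := 1 / (n.choose t : ℝ) * E0 with hA0
  set A1 := 1 / (n.choose (t + 1) : ℝ) * E1 with hA1
  have hA0n : 0 ≤ A0 := by positivity
  have hA1n : 0 ≤ A1 := by positivity
  -- Passing from sets of size `t` to size `t + 1` changes the normalisation by `(n - t) / (t + 1)`.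
  have hE1A : 1 / (n.choose t : ℝ) * E1 = (n - t) / (t + 1) * A1 := by
    rw [hA1]
    field_simp
    linear_combination E1 * hch
  have hαle : α ≤ (A0 + 8 * ((n - t) / (t + 1) * A1)) * (Real.pi / 4) := by
    rw [hα, ← hE1A, hA0]
    refine (mul_le_mul_of_nonneg_left hmain (by positivity)).trans (le_of_eq ?_)
    ring
  have hratio : ((n : ℝ) - t) / (t + 1) ≤ n / t :=
    div_le_div₀ (by linarith) (by linarith) (by linarith) (by linarith)
  have hone : 1 ≤ (n : ℝ) / t := by rw [le_div_iff₀ (by linarith)]; linarith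
  have hα8 : α ≤ n / t * (A0 + A1) * 8 := by
    have e1 : (n - t) / (t + 1) * A1 ≤ n / t * A1 := mul_le_mul_of_nonneg_right hratio hA1n
    have e2 : A0 ≤ n / t * A0 := le_mul_of_one_le_left hA0n hone
    have e3 : 0 ≤ n / t * A1 := by positivity
    have hpi : Real.pi / 4 ≤ 1 := by linarith [Real.pi_le_four]
    calc α ≤ (A0 + 8 * ((n - t) / (t + 1) * A1)) * (Real.pi / 4) := hαle
      _ ≤ (n / t * A0 + 8 * (n / t * A1)) * (Real.pi / 4) :=
          mul_le_mul_of_nonneg_right (by linarith) (by positivity)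
      _ ≤ n / t * A0 + 8 * (n / t * A1) := mul_le_of_le_one_right (by nlinarith) hpi
      _ ≤ _ := by nlinarith
  have hfin : (t : ℝ) / n * α / 8 ≤ A0 + A1 := by
    have : (t : ℝ) / n * α ≤ t / n * (n / t * (A0 + A1) * 8) :=
      mul_le_mul_of_nonneg_left hα8 (by positivity)
    have e : (t : ℝ) / n * (n / t * (A0 + A1) * 8) = (A0 + A1) * 8 := by
      field_simp
    linarith
  have hl2 : 0 < Real.log 2 := Real.log_pos one_lt_two
  have l1 : Real.log 2 ≤ Real.log n := Real.log_le_log two_pos hn0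
  have l2 : Real.log 2 ≤ Real.log (n / α) := Real.log_le_log two_pos (by
    rw [le_div_iff₀ hα0]; linarith)
  have l3 : Real.log 2 ≤ Real.log (1 / α) := Real.log_le_log two_pos (by
    rw [le_div_iff₀ hα0]; linarith)
  have hL : Real.log 2 ^ 4 ≤ Real.log n ^ 2 * Real.log (n / α) * Real.log (1 / α) := by
    calc Real.log 2 ^ 4 = Real.log 2 ^ 2 * Real.log 2 * Real.log 2 := by ring
      _ ≤ _ := by
        have b1 := hl2.le.trans l1
        have b2 := hl2.le.trans l2
        gcongr
  refine le_trans ?_ hfin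
  rw [div_le_iff₀ (lt_of_lt_of_le (by positivity) hL)]
  have : 0 ≤ (t : ℝ) / n * α / 8 := by positivity
  nlinarith [mul_le_mul_of_nonneg_left hL this]

end Subcube
end
end

section
/- Let H be a finite simple graph on a vertex set V with |V| = N, and let ϱ : V → {1, …, N} be a bijection such that for every i ∈ {1, …, N−1}, the vertex ϱ⁻¹(i) has maximum degree among all vertices of the subgraph of H induced on {ϱ⁻¹(j) : j ≥ i}. Orient every edge {u, v} of H from u to v if and only if ϱ(u) < ϱ(v), and let outdeg(w) denote the resulting out-degree of a vertex w. Then for every set U ⊆ V, every v ∈ V ∖ U, and every positive integer g: if outdeg(u) ≤ g for every u ∈ U, then the number of vertices u ∈ U such that {u, v} is an edge of H oriented from u to v is at most g. -/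
/-!
Let `S` be the set of in-neighbours of `v` in `U`, and let `u₀` be its first element in the
ordering. All of `S` survives in the subgraph induced on the vertices from `u₀` onwards, so `v` has
degree at least `|S|` there. By the choice of the ordering `u₀` has maximum degree in that subgraph,
and its degree there is exactly its out-degree, which is at most `g`.
-/

/-- Let `H` be a finite simple graph on `V`, `|V| = N`, and let `ϱ : V ≃ Fin N`
be an ordering such that for every `i ∈ {1,…,N−1}` (0-indexed: `i < N−1`), the vertex
`ϱ⁻¹(i)` has maximum degree in the subgraph induced on `{w : ϱ(w) ≥ i}`. Orient each edge
`{u,v}` from `u` to `v` iff `ϱ(u) < ϱ(v)`. If every `u ∈ U` has out-degree at most `g`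
(with `g > 0` an integer) and `v ∉ U`, then the number of `u ∈ U` with an edge oriented
from `u` to `v` is at most `g`. -/
theorem stmt8 {V : Type*} [Fintype V] [DecidableEq V] (H : SimpleGraph V) [DecidableRel H.Adj]
    (ϱ : V ≃ Fin (Fintype.card V))
    (hord : ∀ i : Fin (Fintype.card V), (i : ℕ) < Fintype.card V - 1 →
      ∀ w : V, i ≤ ϱ w →
        (Finset.univ.filter (fun u : V => i ≤ ϱ u ∧ H.Adj w u)).card ≤
          (Finset.univ.filter (fun u : V => i ≤ ϱ u ∧ H.Adj (ϱ.symm i) u)).card)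
    (U : Finset V) (v : V) (hv : v ∉ U) (g : ℕ) (hg : 0 < g)
    (hdeg : ∀ u ∈ U,
      (Finset.univ.filter (fun w : V => H.Adj u w ∧ ϱ u < ϱ w)).card ≤ g) :
    (U.filter (fun u => H.Adj u v ∧ ϱ u < ϱ v)).card ≤ g := by
  set S := U.filter (fun u => H.Adj u v ∧ ϱ u < ϱ v) with hS
  rcases S.eq_empty_or_nonempty with he | hne
  · simp [he]
  obtain ⟨u₀, hu₀, hmin⟩ := S.exists_min_image ϱ hne
  obtain ⟨hu₀U, -, hlt⟩ := Finset.mem_filter.mp hu₀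
  have hi : ((ϱ u₀ : Fin _) : ℕ) < Fintype.card V - 1 := by
    have := (ϱ v).isLt
    have : (ϱ u₀ : ℕ) < ϱ v := hlt
    omega
  calc S.card
      ≤ (Finset.univ.filter (fun u : V => ϱ u₀ ≤ ϱ u ∧ H.Adj v u)).card := by
        refine Finset.card_le_card fun u hu => ?_
        simpa using ⟨hmin u hu, (Finset.mem_filter.mp hu).2.1.symm⟩
    _ ≤ (Finset.univ.filter (fun u : V => ϱ u₀ ≤ ϱ u ∧ H.Adj (ϱ.symm (ϱ u₀)) u)).card :=
        hord (ϱ u₀) hi v hlt.le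
    _ ≤ (Finset.univ.filter (fun w : V => H.Adj u₀ w ∧ ϱ u₀ < ϱ w)).card := by
        refine Finset.card_le_card fun u hu => ?_
        simp only [Finset.mem_filter, Finset.mem_univ, true_and, Equiv.symm_apply_apply] at hu ⊢
        exact ⟨hu.2, lt_of_le_of_ne hu.1 fun h => hu.2.ne (ϱ.injective h)⟩
    _ ≤ g := hdeg u₀ hu₀U
end

section
/- Let a₁, a₂, a₃, a₄ be nonnegative real numbers satisfying a₁ + a₃ ≥ 3·(a₂ + a₄), a₁ + a₂ ≥ 3·(a₃ + a₄), and a₁ + a₃ > 0. Then |a₁ − a₃| / (a₁ + a₃) ≥ 1/20. -/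
/-- if `a₁,a₂,a₃,a₄ ≥ 0` satisfy `a₁+a₃ ≥ 3(a₂+a₄)`, `a₁+a₂ ≥ 3(a₃+a₄)` and
`a₁+a₃ > 0`, then `|a₁−a₃|/(a₁+a₃) ≥ 1/20`. -/
theorem stmt13 (a1 a2 a3 a4 : ℝ) (h1 : 0 ≤ a1) (h2 : 0 ≤ a2) (h3 : 0 ≤ a3) (h4 : 0 ≤ a4)
    (hA : 3 * (a2 + a4) ≤ a1 + a3) (hB : 3 * (a3 + a4) ≤ a1 + a2) (hpos : 0 < a1 + a3) :
    1/20 ≤ |a1 - a3| / (a1 + a3) := by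
  -- Eliminating `a2` between `hA` and `hB` gives `2 * a3 ≤ a1`, so the ratio is in fact at least `1/3`.
  have h : 2 * a3 ≤ a1 := by linarith
  rw [le_div_iff₀ hpos]
  linarith [le_abs_self (a1 - a3)]
end

section
/- Let p be a distribution on {-1,1}^n, t ∈ {1, …, n−1}, κ ≥ 1 an integer, γ > 0, let π be a sequence of t+1 distinct indices from [n], y ∈ {-1,1}^n, and i ∈ [t+1]. Suppose the conditioning events defining the restricted distributions p_{|ρ(π_{-i}, y)} and p_{|ρ(π_{-i}, y^{(π(i))})} both have positive p-probability, and that both of these restricted distributions q satisfy ‖μ(q)‖₂ < √γ / 2^{κ+1}. Then p_{|ρ(π, y)} is well defined and ∑_{j ∈ [t+1], j ≠ i} ( μ(p_{|ρ(π,y)})_{π(j)} )² < γ / 2^{2κ+2}. -/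
/-!
The event "`x` agrees with `y` off `S(π)`" splits, according to the value of `x` at `π i`, into the
two events "`x` agrees with `y`, respectively with `y` flipped at `π i`, off `S(π_{-i})`"
(`sum_agree_insert`). Hence the mass of the large event is the sum `A + B` of the two small masses,
and on each coordinate the mean of the large restriction is the convex combination of the means of
the two small ones with weights `A / (A + B)` and `B / (A + B)`. Convexity of the squared Euclidean
norm (`sum_sq_mix_lt`) then bounds the mean vector of the large restriction.
-/

open scoped Classical

noncomputable section

namespace Subcube

/-- Agreement with `y` off `insert a S` splits into agreement off `S` with `y` or with `y` flipped
at `a`, according to the value at `a`. -/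
lemma sum_agree_insert {n : ℕ} (f : (Fin n → Bool) → ℝ) (S : Finset (Fin n)) (a : Fin n)
    (ha : a ∉ S) (y : Fin n → Bool) :
    (∑ x : Fin n → Bool, if ∀ j ∉ insert a S, x j = y j then f x else 0)
      = (∑ x : Fin n → Bool, if ∀ j ∉ S, x j = y j then f x else 0)
        + ∑ x : Fin n → Bool, if ∀ j ∉ S, x j = flipAt a y j then f x else 0 := by
  rw [← Finset.sum_add_distrib]
  refine Finset.sum_congr rfl fun x _ => ?_
  have e1 : (∀ j ∉ S, x j = y j) ↔ (∀ j ∉ insert a S, x j = y j) ∧ x a = y a := by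
    refine ⟨fun h => ⟨fun j hj => h j fun h' => hj (Finset.mem_insert_of_mem h'), h a ha⟩,
      fun h j hj => ?_⟩
    by_cases hja : j = a
    · exact hja ▸ h.2
    · exact h.1 j (by simp [hja, hj])
  have e2 : (∀ j ∉ S, x j = flipAt a y j) ↔
      (∀ j ∉ insert a S, x j = y j) ∧ x a = !(y a) := by
    refine ⟨fun h => ⟨fun j hj => ?_, by simpa [flipAt] using h a ha⟩, fun h j hj => ?_⟩
    · simp only [Finset.mem_insert, not_or] at hj
      simpa [flipAt, hj.1] using h j hj.2
    · by_cases hja : j = a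
      · subst hja
        simpa [flipAt] using h.2
      · simpa [flipAt, hja] using h.1 j (by simp [hja, hj])
  by_cases h : ∀ j ∉ insert a S, x j = y j
  · cases hx : x a <;> cases hy : y a <;> simp only [e1, e2, hx, hy, h] <;> simp
  · simp only [e1, e2, h, false_and, if_false, add_zero]

/-- Convexity of the squared Euclidean norm: a weighted average of two vectors of squared norm
less than `C` has squared norm less than `C`. -/
lemma sum_sq_mix_lt {ι : Type*} (T : Finset ι) (u v : ι → ℝ) (A B C : ℝ) (hA : 0 < A)
    (hB : 0 < B) (hu : ∑ j ∈ T, u j ^ 2 < C) (hv : ∑ j ∈ T, v j ^ 2 < C) :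
    ∑ j ∈ T, ((A * u j + B * v j) / (A + B)) ^ 2 < C := by
  have hAB : 0 < A + B := add_pos hA hB
  have hle : ∑ j ∈ T, ((A * u j + B * v j) / (A + B)) ^ 2
      ≤ ∑ j ∈ T, (A * u j ^ 2 + B * v j ^ 2) / (A + B) := by
    refine Finset.sum_le_sum fun j _ => ?_
    rw [div_pow, div_le_div_iff₀ (by positivity) hAB]
    -- The variance of the two-point average is `A * B * (u j - v j) ^ 2 / (A + B) ^ 2`.
    have h : 0 ≤ (A + B) * (A * B * (u j - v j) ^ 2) := by positivity
    nlinarith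
  refine hle.trans_lt ?_
  rw [← Finset.sum_div, Finset.sum_add_distrib, ← Finset.mul_sum, ← Finset.mul_sum,
    div_lt_iff₀ hAB]
  nlinarith

/-- with `T = S(π_{-i})`, if the conditioning events of `p_{|ρ(π_{-i},y)}` and
`p_{|ρ(π_{-i},y^{(π(i))})}` have positive probability and both restricted distributions have
mean vector of norm `< √γ/2^{κ+1}`, then `p_{|ρ(π,y)}` is well defined and
`∑_{j ≠ i} (μ(p_{|ρ(π,y)})_{π(j)})² < γ/2^{2κ+2}`. -/
theorem stmt14 (n t κ : ℕ) (ht : 1 ≤ t) (htn : t < n) (hκ : 1 ≤ κ)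
    (γ : ℝ) (hγ : 0 < γ)
    (p : (Fin n → Bool) → ℝ) (hp : IsDist p)
    (π : Fin (t+1) → Fin n) (hπ : Function.Injective π)
    (y : Fin n → Bool) (i : Fin (t+1))
    (hpos1 : 0 < offMass p (((Finset.univ : Finset (Fin (t+1))).erase i).image π) y)
    (hpos2 : 0 < offMass p (((Finset.univ : Finset (Fin (t+1))).erase i).image π)
        (flipAt (π i) y))
    (hm1 : Real.sqrt (∑ j ∈ ((Finset.univ : Finset (Fin (t+1))).erase i).image π,
        (condMean p (((Finset.univ : Finset (Fin (t+1))).erase i).image π) y j) ^ 2)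
      < Real.sqrt γ / 2 ^ (κ+1))
    (hm2 : Real.sqrt (∑ j ∈ ((Finset.univ : Finset (Fin (t+1))).erase i).image π,
        (condMean p (((Finset.univ : Finset (Fin (t+1))).erase i).image π)
          (flipAt (π i) y) j) ^ 2)
      < Real.sqrt γ / 2 ^ (κ+1)) :
    0 < offMass p ((Finset.univ : Finset (Fin (t+1))).image π) y ∧
    ∑ j ∈ (Finset.univ : Finset (Fin (t+1))).erase i,
        (condMean p ((Finset.univ : Finset (Fin (t+1))).image π) y (π j)) ^ 2
      < γ / 2 ^ (2*κ+2) := by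
  set S := ((Finset.univ : Finset (Fin (t+1))).erase i).image π with hS
  have hiS : π i ∉ S := by
    simp only [hS, Finset.mem_image, Finset.mem_erase, not_exists, not_and]
    exact fun j hj h => hj.1 (hπ h)
  have hins : (Finset.univ : Finset (Fin (t+1))).image π = insert (π i) S := by
    rw [hS, ← Finset.image_insert, Finset.insert_erase (Finset.mem_univ i)]
  have hmass : offMass p (insert (π i) S) y = offMass p S y + offMass p S (flipAt (π i) y) :=
    sum_agree_insert p S (π i) hiS y
  have hmean : ∀ j, condMean p (insert (π i) S) y j
      = (offMass p S y * condMean p S y j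
          + offMass p S (flipAt (π i) y) * condMean p S (flipAt (π i) y) j)
        / (offMass p S y + offMass p S (flipAt (π i) y)) := by
    intro j
    have h := sum_agree_insert (fun x => p x * sgn (x j)) S (π i) hiS y
    simp only [condMean]
    rw [mul_div_cancel₀ _ hpos1.ne', mul_div_cancel₀ _ hpos2.ne', h, hmass]
  have hsq : (Real.sqrt γ / 2 ^ (κ+1)) ^ 2 = γ / 2 ^ (2*κ+2) := by
    rw [div_pow, Real.sq_sqrt hγ.le, ← pow_mul]
    congr 2
    ring
  have hb : 0 < Real.sqrt γ / 2 ^ (κ+1) := by positivity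
  rw [Real.sqrt_lt' hb, hsq] at hm1 hm2
  rw [hins]
  refine ⟨by rw [hmass]; exact add_pos hpos1 hpos2, ?_⟩
  have hmain := sum_sq_mix_lt S _ _ _ _ _ hpos1 hpos2 hm1 hm2
  simp only [← hmean] at hmain
  rwa [hS, Finset.sum_image hπ.injOn, ← hS] at hmain

end Subcube
end
end

section
/- Let p be a distribution on {-1,1}^d and let q ≥ 1 be an integer. Let x^{(1)}, …, x^{(q)}, y^{(1)}, …, y^{(q)} be 2q i.i.d. samples from p, X̄ = (1/q)·∑_{k=1}^q x^{(k)}, Ȳ = (1/q)·∑_{k=1}^q y^{(k)}, and Z = ⟨X̄, Ȳ⟩. Then E[Z] = ‖μ(p)‖₂² and Var[Z] ≤ (1/q²)·‖Σ(p)‖_F² + (4/q)·‖μ(p)‖₂²·‖Σ(p)‖_F. -/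
/-!
The two blocks of samples are independent, so `E[Z] = ∑ i, E[X̄ i] E[Ȳ i] = ‖μ‖²` and
`E[Z²] = ∑ i j, M i j ^ 2`, where `M i j = E[X̄ i X̄ j]` is the second-moment matrix of one block
average. Separating the diagonal pairs of samples from the independent ones gives
`M = Σ / q + (1 - 1/q) μ μᵀ` (`blockE_avg_mul`), and therefore
`Var[Z] = ‖Σ‖_F² / q² + (2/q) (1 - 1/q) μᵀ Σ μ + ((1 - 1/q)² - 1) ‖μ‖⁴`.
The last term is nonpositive and `μᵀ Σ μ ≤ ‖μ‖² ‖Σ‖_F` by Cauchy–Schwarz (`quad_le`), which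
gives the bound even with `2/q` in place of `4/q`.
-/

open scoped Classical

noncomputable section

namespace Subcube

/-- The second-moment matrix `Σ(p)_{ij} = E_{x∼p}[x_i x_j]`. -/
def covMat {d : ℕ} (p : (Fin d → Bool) → ℝ) (i j : Fin d) : ℝ :=
  ∑ x : Fin d → Bool, p x * (sgn (x i) * sgn (x j))

/-- Squared Frobenius norm of `Σ(p)`. -/
def frobSq {d : ℕ} (p : (Fin d → Bool) → ℝ) : ℝ := ∑ i : Fin d, ∑ j : Fin d, covMat p i j ^ 2

/-- The statistic `Z = ⟨X̄, Ȳ⟩` computed from an outcome `ω = (X, Y)` consisting of two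
blocks of `q` samples. -/
def Zstat {d q : ℕ} (ω : (Fin q → (Fin d → Bool)) × (Fin q → (Fin d → Bool))) : ℝ :=
  ∑ i : Fin d, ((∑ k : Fin q, sgn (ω.1 k i)) / q) * ((∑ k : Fin q, sgn (ω.2 k i)) / q)

/-- Probability of the outcome `ω` under `2q` i.i.d. samples from `p`. -/
def sampleW {d q : ℕ} (p : (Fin d → Bool) → ℝ)
    (ω : (Fin q → (Fin d → Bool)) × (Fin q → (Fin d → Bool))) : ℝ :=
  (∏ k : Fin q, p (ω.1 k)) * (∏ k : Fin q, p (ω.2 k))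

/-- Expectation of `f` over a block of `q` independent samples with mass function `p`. -/
def blockE {α : Type*} [Fintype α] {q : ℕ} (p : α → ℝ) (f : (Fin q → α) → ℝ) : ℝ :=
  ∑ x : Fin q → α, (∏ k, p (x k)) * f x

section Block

variable {α : Type*} [Fintype α] {q : ℕ} {p : α → ℝ}

lemma blockE_sum {ι : Type*} (s : Finset ι) (f : ι → (Fin q → α) → ℝ) :
    blockE p (fun x => ∑ i ∈ s, f i x) = ∑ i ∈ s, blockE p (f i) := by
  unfold blockE
  simp_rw [Finset.mul_sum]
  exact Finset.sum_comm

lemma blockE_div (f : (Fin q → α) → ℝ) (c : ℝ) :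
    blockE p (fun x => f x / c) = blockE p f / c := by
  simp only [blockE, Finset.sum_div, mul_div_assoc]

/-- Expectations of products of functions of the individual samples factor. -/
lemma blockE_prod (g : Fin q → α → ℝ) :
    blockE p (fun x => ∏ k, g k (x k)) = ∏ k, ∑ a, p a * g k a := by
  unfold blockE
  simp_rw [← Finset.prod_mul_distrib]
  rw [Finset.prod_univ_sum, Fintype.piFinset_univ]

lemma blockE_one (hp : IsDist p) : blockE p (fun _ : Fin q → α => 1) = 1 := by
  have h := blockE_prod (p := p) (q := q) (fun _ _ => 1)
  simpa [hp.2] using h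

lemma blockE_single (hp : IsDist p) (g : α → ℝ) (k : Fin q) :
    blockE p (fun x => g (x k)) = ∑ a, p a * g a := by
  have h := blockE_prod (p := p) (q := q) (fun m a => if m = k then g a else 1)
  have h2 : ∀ m : Fin q, (∑ a, p a * (if m = k then g a else 1))
      = if m = k then ∑ a, p a * g a else 1 := by
    intro m
    split_ifs <;> simp [hp.2]
  simp only [h2] at h
  simpa using h

lemma blockE_pair (hp : IsDist p) (g h : α → ℝ) {k l : Fin q} (hkl : k ≠ l) :
    blockE p (fun x => g (x k) * h (x l)) = (∑ a, p a * g a) * ∑ a, p a * h a := by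
  have H := blockE_prod (p := p) (q := q)
    (fun m a => (if m = k then g a else 1) * (if m = l then h a else 1))
  have h2 : ∀ m : Fin q,
      (∑ a, p a * ((if m = k then g a else 1) * (if m = l then h a else 1)))
      = (if m = k then ∑ a, p a * g a else 1) * (if m = l then ∑ a, p a * h a else 1) := by
    intro m
    by_cases h1 : m = k
    · have : m ≠ l := fun e => hkl (h1.symm.trans e)
      simp [h1, hkl]
    · by_cases h3 : m = l <;> simp [h1, h3, hp.2, hkl.symm]
  simp only [h2, Finset.prod_mul_distrib] at H
  simpa using H

lemma blockE_avg (hq : 1 ≤ q) (hp : IsDist p) (g : α → ℝ) :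
    blockE p (fun x : Fin q → α => (∑ k, g (x k)) / q) = ∑ a, p a * g a := by
  have hq0 : (q : ℝ) ≠ 0 := by positivity
  rw [blockE_div, blockE_sum]
  simp only [blockE_single hp, Finset.sum_const, Finset.card_univ, Fintype.card_fin, nsmul_eq_mul]
  field_simp

/-- Second moments of block averages: of the `q²` pairs of samples, `q` are diagonal and the
other pairs are independent. -/
lemma blockE_avg_mul (hq : 1 ≤ q) (hp : IsDist p) (g h : α → ℝ) :
    blockE p (fun x : Fin q → α => ((∑ k, g (x k)) / q) * ((∑ k, h (x k)) / q))
      = (1 / (q : ℝ)) * (∑ a, p a * (g a * h a))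
        + (1 - 1 / (q : ℝ)) * ((∑ a, p a * g a) * ∑ a, p a * h a) := by
  have hq0 : (q : ℝ) ≠ 0 := by positivity
  have hL : (fun x : Fin q → α => ((∑ k, g (x k)) / (q : ℝ)) * ((∑ k, h (x k)) / q))
      = fun x => (∑ k, ∑ l, g (x k) * h (x l)) / ((q : ℝ) * q) := by
    funext x
    rw [div_mul_div_comm, Finset.sum_mul_sum]
  rw [hL, blockE_div, blockE_sum]
  simp_rw [blockE_sum]
  set A := ∑ a, p a * (g a * h a)
  set B := (∑ a, p a * g a) * ∑ a, p a * h a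
  have key : ∀ k l : Fin q, blockE p (fun x => g (x k) * h (x l))
      = B + if k = l then A - B else 0 := by
    intro k l
    by_cases hkl : k = l
    · subst hkl
      simpa using blockE_single hp (fun a => g a * h a) k
    · simpa [hkl] using blockE_pair hp g h hkl
  simp only [key, Finset.sum_add_distrib, Finset.sum_const, Finset.card_univ, Fintype.card_fin,
    nsmul_eq_mul, Finset.sum_ite_eq, Finset.mem_univ, if_true]
  field_simp
  ring

end Block

/-- `meanVec` is defined over an abstract index type, so its sum over the cube carries the classical
`Fintype` instance; here it is the standard one on `Fin d → Bool`. -/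
lemma meanVec_apply {d : ℕ} (p : (Fin d → Bool) → ℝ) (i : Fin d) :
    meanVec p i = ∑ a : Fin d → Bool, p a * sgn (a i) := by
  unfold meanVec
  congr!

/-- Independence of the two blocks. -/
lemma sum_sampleW_mul {d q : ℕ} (p : (Fin d → Bool) → ℝ) (f g : (Fin q → (Fin d → Bool)) → ℝ) :
    (∑ ω : (Fin q → (Fin d → Bool)) × (Fin q → (Fin d → Bool)),
      sampleW p ω * (f ω.1 * g ω.2)) = blockE p f * blockE p g := by
  unfold blockE sampleW
  rw [Finset.sum_mul_sum, Fintype.sum_prod_type]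
  exact Finset.sum_congr rfl fun x _ => Finset.sum_congr rfl fun y _ => by ring

lemma sum_sampleW_Zstat {d q : ℕ} (hq : 1 ≤ q) {p : (Fin d → Bool) → ℝ} (hp : IsDist p) :
    (∑ ω : (Fin q → (Fin d → Bool)) × (Fin q → (Fin d → Bool)), sampleW p ω * Zstat ω)
      = normSq (meanVec p) := by
  unfold Zstat normSq
  simp_rw [Finset.mul_sum]
  rw [Finset.sum_comm]
  refine Finset.sum_congr rfl fun i _ => ?_
  rw [sum_sampleW_mul p (fun x => (∑ k, sgn (x k i)) / q) (fun x => (∑ k, sgn (x k i)) / q),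
    blockE_avg hq hp (fun a => sgn (a i)), sq, meanVec_apply]

lemma sum_sampleW_Zstat_sq {d q : ℕ} (hq : 1 ≤ q) {p : (Fin d → Bool) → ℝ} (hp : IsDist p) :
    (∑ ω : (Fin q → (Fin d → Bool)) × (Fin q → (Fin d → Bool)), sampleW p ω * Zstat ω ^ 2)
      = ∑ i, ∑ j, ((1 / (q : ℝ)) * covMat p i j
          + (1 - 1 / (q : ℝ)) * (meanVec p i * meanVec p j)) ^ 2 := by
  unfold Zstat
  simp_rw [sq (∑ i : Fin d, _), Finset.sum_mul_sum, Finset.mul_sum]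
  rw [Finset.sum_comm]
  refine Finset.sum_congr rfl fun i _ => ?_
  rw [Finset.sum_comm]
  refine Finset.sum_congr rfl fun j _ => ?_
  rw [meanVec_apply, meanVec_apply, covMat, sq,
    ← blockE_avg_mul hq hp (fun a => sgn (a i)) (fun a => sgn (a j)), ← sum_sampleW_mul p
    (fun x => ((∑ k, sgn (x k i)) / q) * ((∑ k, sgn (x k j)) / q))
    (fun x => ((∑ k, sgn (x k i)) / q) * ((∑ k, sgn (x k j)) / q))]
  exact Finset.sum_congr rfl fun ω _ => by ring

/-- `‖v vᵀ‖_F² = ‖v‖⁴`. -/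
lemma sum_sum_mul_sq {d : ℕ} (v : Fin d → ℝ) :
    ∑ i, ∑ j, (v i * v j) ^ 2 = normSq v ^ 2 := by
  unfold normSq
  simp_rw [sq (∑ i, _), Finset.sum_mul_sum, mul_pow]

/-- Cauchy–Schwarz for the Frobenius inner product of `Σ` with `v vᵀ`. -/
lemma quad_le {d : ℕ} (p : (Fin d → Bool) → ℝ) (v : Fin d → ℝ) :
    ∑ i, ∑ j, covMat p i j * (v i * v j) ≤ normSq v * Real.sqrt (frobSq p) := by
  have h := Real.sum_mul_le_sqrt_mul_sqrt (Finset.univ : Finset (Fin d × Fin d))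
    (fun t => covMat p t.1 t.2) (fun t => v t.1 * v t.2)
  have hv : 0 ≤ normSq v := Finset.sum_nonneg fun i _ => sq_nonneg _
  simp only [Fintype.sum_prod_type] at h
  rw [sum_sum_mul_sq, Real.sqrt_sq hv, mul_comm] at h
  exact h

/-- for `2q` i.i.d. samples from `p` and `Z = ⟨X̄,Ȳ⟩`:
`E[Z] = ‖μ(p)‖₂²` and `Var[Z] ≤ (1/q²)‖Σ(p)‖_F² + (4/q)‖μ(p)‖₂²‖Σ(p)‖_F`. -/
theorem stmt15 (d q : ℕ) (hq : 1 ≤ q) (p : (Fin d → Bool) → ℝ) (hp : IsDist p) :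
    (∑ ω : (Fin q → (Fin d → Bool)) × (Fin q → (Fin d → Bool)), sampleW p ω * Zstat ω)
        = normSq (meanVec p) ∧
    (∑ ω : (Fin q → (Fin d → Bool)) × (Fin q → (Fin d → Bool)),
        sampleW p ω * (Zstat ω - normSq (meanVec p)) ^ 2)
      ≤ (1 / (q:ℝ) ^ 2) * frobSq p
        + (4 / (q:ℝ)) * normSq (meanVec p) * Real.sqrt (frobSq p) := by
  have hmean := sum_sampleW_Zstat hq hp
  refine ⟨hmean, ?_⟩
  have hsq := sum_sampleW_Zstat_sq hq hp
  have htot : (∑ ω : (Fin q → (Fin d → Bool)) × (Fin q → (Fin d → Bool)), sampleW p ω) = 1 := by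
    have h := sum_sampleW_mul (q := q) p (fun _ => 1) (fun _ => 1)
    simpa [blockE_one hp] using h
  set N := normSq (meanVec p) with hN
  have hvar : (∑ ω : (Fin q → (Fin d → Bool)) × (Fin q → (Fin d → Bool)),
        sampleW p ω * (Zstat ω - N) ^ 2)
      = (∑ ω : (Fin q → (Fin d → Bool)) × (Fin q → (Fin d → Bool)), sampleW p ω * Zstat ω ^ 2)
        - N ^ 2 := by
    have h : ∀ ω : (Fin q → (Fin d → Bool)) × (Fin q → (Fin d → Bool)),
        sampleW p ω * (Zstat ω - N) ^ 2
          = sampleW p ω * Zstat ω ^ 2 - 2 * N * (sampleW p ω * Zstat ω)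
            + N ^ 2 * sampleW p ω := fun ω => by ring
    simp_rw [h]
    rw [Finset.sum_add_distrib, Finset.sum_sub_distrib, ← Finset.mul_sum, ← Finset.mul_sum,
      hmean, htot]
    ring
  set t : ℝ := 1 / (q : ℝ) with ht
  set Q := ∑ i, ∑ j, covMat p i j * (meanVec p i * meanVec p j) with hQ
  have hexp : ∑ i, ∑ j, (t * covMat p i j + (1 - t) * (meanVec p i * meanVec p j)) ^ 2
      = t ^ 2 * frobSq p + 2 * t * (1 - t) * Q + (1 - t) ^ 2 * N ^ 2 := by
    rw [hN, ← sum_sum_mul_sq, hQ, frobSq]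
    simp_rw [Finset.mul_sum, ← Finset.sum_add_distrib]
    exact Finset.sum_congr rfl fun i _ => Finset.sum_congr rfl fun j _ => by ring
  rw [hvar, hsq, hexp]
  have hq1 : (1 : ℝ) ≤ q := by exact_mod_cast hq
  have ht0 : 0 ≤ t := by positivity
  have ht1 : t ≤ 1 := by
    rw [ht]
    exact (div_le_one (by linarith)).2 hq1
  have hN0 : 0 ≤ N := Finset.sum_nonneg fun i _ => sq_nonneg _
  have hQle : Q ≤ N * Real.sqrt (frobSq p) := quad_le p (meanVec p)
  have hNF : 0 ≤ N * Real.sqrt (frobSq p) := mul_nonneg hN0 (Real.sqrt_nonneg _)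
  have e1 : 1 / (q : ℝ) ^ 2 = t ^ 2 := by rw [ht, div_pow, one_pow]
  have e2 : 4 / (q : ℝ) = 4 * t := by rw [ht]; ring
  rw [e1, e2]
  have h1 : 2 * t * (1 - t) * Q ≤ 2 * t * (1 - t) * (N * Real.sqrt (frobSq p)) :=
    mul_le_mul_of_nonneg_left hQle (mul_nonneg (by linarith) (by linarith))
  have h2 : 2 * t * (1 - t) * (N * Real.sqrt (frobSq p)) ≤ 4 * t * (N * Real.sqrt (frobSq p)) :=
    mul_le_mul_of_nonneg_right (by nlinarith) hNF
  have h3 : (1 - t) ^ 2 * N ^ 2 ≤ 1 * N ^ 2 :=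
    mul_le_mul_of_nonneg_right (by nlinarith) (sq_nonneg _)
  linarith

end Subcube
end
end

section
/- Let μ ∈ ℝ and σ > 0, and let X be a real Gaussian random variable with mean μ and variance σ². Then (2·Pr[X > 0] − 1)² ≥ (2/3)·min( μ²/(2σ²), 1 ). -/
/-!
With `x = μ / (√2 σ)` and `E x = ∫ t in 0..x, exp (-t²)`, the Gaussian integral on a half-line gives
`2 Pr[X > 0] - 1 = (2 / √π) E x`. Since `E` is odd and increasing, it suffices to bound it from below
by a linear function on `[0, 1]`. Integrating `exp (-u) ≥ (1 - u / 3) ^ 3` at `u = t²` gives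
`E x ≥ x - x³/3 + x⁵/15 - x⁷/189 ≥ (688 / 945) x` there, and
`(4 / π) (688 / 945)² > 2 / 3` because `π < 3.15`.
-/

open MeasureTheory ProbabilityTheory Real Set

/-- The law `N(μ, σ²)` is the image of `N(0, 1/2)`, whose density is `exp (-t²) / √π`, under
`t ↦ √2 σ t + μ`. -/
lemma two_mul_gaussianReal_Ioi_sub_one (μ σ : ℝ) (hσ : 0 < σ) :
    2 * ((gaussianReal μ ⟨σ ^ 2, sq_nonneg σ⟩) (Ioi 0)).toReal - 1 =
      2 / √π * ∫ t in (0 : ℝ)..(μ / (√2 * σ)), exp (-t ^ 2) := by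
  have h2 : (0 : ℝ) < √2 * σ := by positivity
  have hmap : gaussianReal μ ⟨σ ^ 2, sq_nonneg σ⟩ =
      ((gaussianReal 0 (1 / 2)).map (fun t => √2 * σ * t)).map (fun t => t + μ) := by
    rw [gaussianReal_map_const_mul, gaussianReal_map_add_const]
    congr 1
    · simp
    · ext
      simp only [NNReal.coe_mul, NNReal.coe_mk, NNReal.coe_div, NNReal.coe_one, NNReal.coe_ofNat,
        mul_pow, sq_sqrt zero_le_two]
      change σ ^ 2 = _
      ring
  have hpre : (fun t => √2 * σ * t) ⁻¹' ((fun t => t + μ) ⁻¹' Ioi 0) =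
      Ioi (-(μ / (√2 * σ))) := by
    ext t
    simp only [mem_preimage, mem_Ioi]
    rw [← neg_div, div_lt_iff₀ h2]
    constructor <;> intro h <;> linarith
  rw [hmap, Measure.map_apply (by fun_prop) measurableSet_Ioi,
    Measure.map_apply (by fun_prop) (measurableSet_Ioi.preimage (by fun_prop)), hpre]
  set x := μ / (√2 * σ)
  have hint : Integrable (fun t : ℝ => exp (-t ^ 2)) := by
    simpa using integrable_exp_neg_mul_sq (b := 1) one_pos
  have h0 : ∫ t in Ioi (0 : ℝ), exp (-t ^ 2) = √π / 2 := by
    simpa using integral_gaussian_Ioi 1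
  have hsplit : (∫ t in Ioi (-x), exp (-t ^ 2)) =
      (∫ t in (0 : ℝ)..x, exp (-t ^ 2)) + √π / 2 := by
    have h := intervalIntegral.integral_Ioi_sub_Ioi' (a := -x) (b := 0)
      hint.integrableOn hint.integrableOn
    have hneg := intervalIntegral.integral_comp_neg (a := 0) (b := x)
      (fun t : ℝ => exp (-t ^ 2))
    simp only [neg_sq, neg_zero] at hneg
    rw [hneg, ← h, h0]
    ring
  have hpdf : ∀ t, gaussianPDFReal 0 (1 / 2) t = (√π)⁻¹ * exp (-t ^ 2) := by
    intro t
    have h : 2 * π * ((1 / 2 : NNReal) : ℝ) = π := by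
      push_cast
      ring
    have h' : (2 : ℝ) * ((1 / 2 : NNReal) : ℝ) = 1 := by norm_num
    rw [gaussianPDFReal, h, h', sub_zero, div_one]
  have hnn : 0 ≤ ∫ t in Ioi (-x), gaussianPDFReal 0 (1 / 2) t :=
    integral_nonneg fun t => gaussianPDFReal_nonneg _ _ _
  rw [gaussianReal_apply_eq_integral _ (by norm_num), ENNReal.toReal_ofReal hnn]
  simp only [hpdf]
  rw [integral_const_mul, hsplit]
  have hpi : √π ≠ 0 := by positivity
  field_simp
  ring

lemma linear_le_integral_exp_neg_sq {x : ℝ} (h0 : 0 ≤ x) (h1 : x ≤ 1) :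
    688 / 945 * x ≤ ∫ t in (0 : ℝ)..x, exp (-t ^ 2) := by
  have hle : (∫ t in (0 : ℝ)..x, (1 - t ^ 2 + t ^ 4 / 3 - t ^ 6 / 27)) ≤
      ∫ t in (0 : ℝ)..x, exp (-t ^ 2) := by
    refine intervalIntegral.integral_mono_on h0
      (Continuous.intervalIntegrable (by fun_prop) _ _)
      (Continuous.intervalIntegrable (by fun_prop) _ _) fun t ht => ?_
    have ht2 : t ^ 2 ≤ (3 : ℕ) := by
      push_cast
      nlinarith [ht.1, ht.2]
    calc 1 - t ^ 2 + t ^ 4 / 3 - t ^ 6 / 27 = (1 - t ^ 2 / (3 : ℕ)) ^ 3 := by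
          push_cast
          ring
      _ ≤ exp (-t ^ 2) := one_sub_div_pow_le_exp_neg ht2
  have hpoly : (∫ t in (0 : ℝ)..x, (1 - t ^ 2 + t ^ 4 / 3 - t ^ 6 / 27)) =
      x - x ^ 3 / 3 + x ^ 5 / 15 - x ^ 7 / 189 := by
    have hd : ∀ t ∈ uIcc 0 x, HasDerivAt
        (fun t : ℝ => t - t ^ 3 / 3 + t ^ 5 / 15 - t ^ 7 / 189)
        (1 - t ^ 2 + t ^ 4 / 3 - t ^ 6 / 27) t := by
      intro t _
      refine ((((hasDerivAt_id t).sub ((hasDerivAt_pow 3 t).div_const 3)).add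
        ((hasDerivAt_pow 5 t).div_const 15)).sub
        ((hasDerivAt_pow 7 t).div_const 189)).congr_deriv ?_
      push_cast
      ring
    rw [intervalIntegral.integral_eq_sub_of_hasDerivAt hd
      (Continuous.intervalIntegrable (by fun_prop) _ _)]
    ring
  -- In `y = x²`, the quotient by `x` minus its value at `y = 1` is `1 - y` times a positive factor.
  have hfac : x - x ^ 3 / 3 + x ^ 5 / 15 - x ^ 7 / 189 - 688 / 945 * x =
      x * ((1 - x ^ 2) * (257 / 945 - 58 / 945 * x ^ 2 + 5 / 945 * x ^ 4)) := by
    ring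
  have hx2 : x ^ 2 ≤ 1 := by nlinarith
  have : 0 ≤ x * ((1 - x ^ 2) * (257 / 945 - 58 / 945 * x ^ 2 + 5 / 945 * x ^ 4)) := by
    refine mul_nonneg h0 (mul_nonneg (by linarith) ?_)
    nlinarith [sq_nonneg (x ^ 2)]
  linarith

lemma min_le_integral_exp_neg_sq {x : ℝ} (h0 : 0 ≤ x) :
    688 / 945 * min x 1 ≤ ∫ t in (0 : ℝ)..x, exp (-t ^ 2) := by
  refine (linear_le_integral_exp_neg_sq (le_min h0 zero_le_one) (min_le_right _ _)).trans ?_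
  refine intervalIntegral.integral_mono_interval le_rfl (le_min h0 zero_le_one)
    (min_le_left _ _) (Filter.Eventually.of_forall fun t => (exp_pos _).le)
    (Continuous.intervalIntegrable (by fun_prop) _ _)

lemma min_sq_le_integral_exp_neg_sq_sq (x : ℝ) :
    (688 / 945) ^ 2 * min (x ^ 2) 1 ≤ (∫ t in (0 : ℝ)..x, exp (-t ^ 2)) ^ 2 := by
  wlog h0 : 0 ≤ x generalizing x
  · have h := this (-x) (by linarith)
    have hneg := intervalIntegral.integral_comp_neg (a := 0) (b := x)
      (fun t : ℝ => exp (-t ^ 2))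
    simp only [neg_sq, neg_zero] at hneg
    rwa [neg_sq, intervalIntegral.integral_symm, ← hneg, neg_sq] at h
  have hmin : 0 ≤ min x 1 := le_min h0 zero_le_one
  have hsq : min (x ^ 2) 1 ≤ (min x 1) ^ 2 := by
    rcases le_total x 1 with h | h
    · rw [min_eq_left h]
      exact min_le_left _ _
    · rw [min_eq_right h, one_pow]
      exact min_le_right _ _
  calc (688 / 945) ^ 2 * min (x ^ 2) 1 ≤ (688 / 945 * min x 1) ^ 2 := by
        rw [mul_pow]
        gcongr
    _ ≤ _ := by
        gcongr
        exact min_le_integral_exp_neg_sq h0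

/-- for a real Gaussian `X ∼ N(μ, σ²)` with `σ > 0`,
`(2·Pr[X > 0] − 1)² ≥ (2/3)·min(μ²/(2σ²), 1)`. -/
theorem stmt19 (μ σ : ℝ) (hσ : 0 < σ) :
    (2/3) * min (μ ^ 2 / (2 * σ ^ 2)) 1 ≤
      (2 * ((ProbabilityTheory.gaussianReal μ ⟨σ ^ 2, sq_nonneg σ⟩) (Set.Ioi 0)).toReal - 1) ^ 2 := by
  have hx : μ ^ 2 / (2 * σ ^ 2) = (μ / (√2 * σ)) ^ 2 := by
    rw [div_pow, mul_pow, sq_sqrt zero_le_two]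
  rw [two_mul_gaussianReal_Ioi_sub_one μ σ hσ, hx, mul_pow, div_pow 2, sq_sqrt pi_pos.le]
  have hmin : 0 ≤ min ((μ / (√2 * σ)) ^ 2) 1 := le_min (sq_nonneg _) zero_le_one
  have hc : (2 : ℝ) / 3 ≤ 2 ^ 2 / π * (688 / 945) ^ 2 := by
    rw [div_mul_eq_mul_div, le_div_iff₀ pi_pos]
    nlinarith [pi_lt_d2]
  calc _ ≤ 2 ^ 2 / π * (688 / 945) ^ 2 * min ((μ / (√2 * σ)) ^ 2) 1 := by gcongr
    _ = 2 ^ 2 / π * ((688 / 945) ^ 2 * min ((μ / (√2 * σ)) ^ 2) 1) := by ring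
    _ ≤ _ := by
        gcongr
        exact min_sq_le_integral_exp_neg_sq_sq _
end
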